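/- Let c > 0, set q_n = 1 − c/n and b*(c) = (1/c) log(1 + (e^c − 1)/e), and let (M_n^*) be a sequence of integers with 1 ≤ M_n^* ≤ n−1 and lim_{n→∞} M_n^*/n = b*(c). Then lim_{n→∞} 𝒫_n^{q_n}(S(n,M_n^*)) = 1/e. -/

import Mathlib

open Finset Filter

/-- The number of inversions of a permutation of `Fin n`. -/
def invCount (n : ℕ) (σ : Equiv.Perm (Fin n)) : ℕ :=
  (Finset.univ.filter (fun p : Fin n × Fin n => p.1 < p.2 ∧ σ p.2 < σ p.1)).card

/-- Normalization constant of the Mallows distribution: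
`Z_n(q) = ∑_{σ ∈ S_n} q^{inv σ}`. -/
noncomputable def mallowsZ (n : ℕ) (q : ℝ) : ℝ :=
  ∑ σ : Equiv.Perm (Fin n), q ^ invCount n σ

/-- The Mallows probability of a set `A` of permutations:
`P_n^q(A) = (∑_{σ ∈ A} q^{inv σ}) / Z_n(q)`. -/
noncomputable def mallowsProb (n : ℕ) (q : ℝ) (A : Finset (Equiv.Perm (Fin n))) : ℝ :=
  (∑ σ ∈ A, q ^ invCount n σ) / mallowsZ n q

/-- The success event for the strategy `S(n,M)`.  Positions are indexed by `Fin n`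
(the index `i : Fin n` represents the `(i+1)`-st arriving item) and ranks are the
values of `σ` (the value `n-1`, i.e. the top of `Fin n`, represents the highest
rank `n`).  For `M ≥ 1` the strategy succeeds iff for some position `j` with
`(j:ℕ) ≥ M` (i.e. item number `j+1 ≥ M+1`) the item at position `j` has the top
rank and the maximum rank among the items strictly before position `j` equals the
maximum rank among the first `M` items.  For `M = 0` it succeeds iff the first
item has top rank. -/
def winEvent (n M : ℕ) : Finset (Equiv.Perm (Fin n)) :=
  if M = 0 then
    Finset.univ.filter (fun σ => ∀ i : Fin n, (i : ℕ) = 0 → (σ i : ℕ) = n - 1)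
  else
    Finset.univ.filter (fun σ => ∃ j : Fin n, M ≤ (j : ℕ) ∧ (σ j : ℕ) = n - 1 ∧
      (Finset.univ.filter (fun i : Fin n => i < j)).sup (fun i => (σ i : ℕ)) =
      (Finset.univ.filter (fun i : Fin n => (i : ℕ) < M)).sup (fun i => (σ i : ℕ)))

/-- `𝒫_n^q(S(n,M))`, the success probability of the strategy `S(n,M)` under the
Mallows distribution with parameter `q`. -/
noncomputable def succProb (n M : ℕ) (q : ℝ) : ℝ := mallowsProb n q (winEvent n M)

/-!
Build a Mallows permutation one arrival at a time: given the relative order of the first `n`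
arrivals, the next one has exactly `i` of them above it with probability proportional to `q ^ i`.
Writing `[n] = 1 + q + ⋯ + q ^ (n - 1)`, the probability `p` that the best item is among the first
`M` of `n` is therefore a product of factors `q [j] / [j + 1]`, and the success probability is
`p * ∑ 1 / (q [j])`, both over `M ≤ j < n`. Since `[j + 1] / (q [j]) = 1 + 1 / (q [j])`, the sum is
close to `-log p`, so the success probability is close to `-p log p`; at the critical threshold
`p → 1 / e`.
-/

open Real Topology

/-- The `q`-analogue `[n] = 1 + q + ⋯ + q ^ (n - 1)` of a natural number: the total
weight of the relative ranks that the `n`-th arrival can take. -/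
def qNumber {R : Type*} [Semiring R] (q : R) (n : ℕ) : R := ∑ i ∈ range n, q ^ i

lemma qNumber_succ {R : Type*} [Semiring R] (q : R) (n : ℕ) :
    qNumber q (n + 1) = q * qNumber q n + 1 :=
  geom_sum_succ

lemma qNumber_pos {R : Type*} [Semiring R] [PartialOrder R] [IsStrictOrderedRing R] {q : R}
    (hq : 0 < q) {n : ℕ} (hn : 0 < n) : 0 < qNumber q n :=
  geom_sum_pos hq.le hn.ne'

lemma sum_pow_sub_eq_mul_qNumber {R : Type*} [Semiring R] (q : R) (n : ℕ) :
    ∑ k : Fin n, q ^ (n - (k : ℕ)) = q * qNumber q n := by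
  rw [Fin.sum_univ_eq_sum_range (fun k => q ^ (n - k)), qNumber, mul_sum, ← sum_range_reflect]
  refine sum_congr rfl fun i hi => ?_
  have := mem_range.1 hi
  rw [← pow_succ']
  congr 1
  omega

/-- The permutation of `Fin (n + 1)` that takes the value `k` at the last position and orders the
other positions as `e` does. Every permutation of `Fin (n + 1)` arises once, which is what the
recursions in the number of arrivals rest on. -/
def permSnoc {n : ℕ} (k : Fin (n + 1)) (e : Equiv.Perm (Fin n)) : Equiv.Perm (Fin (n + 1)) :=
  ((finSuccEquiv' (Fin.last n)).trans e.optionCongr).trans (finSuccEquiv' k).symm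

section PermSnoc

variable {n : ℕ} (k : Fin (n + 1)) (e : Equiv.Perm (Fin n))

@[simp]
lemma permSnoc_last : permSnoc k e (Fin.last n) = k := by
  simp [permSnoc]

@[simp]
lemma permSnoc_castSucc (i : Fin n) : permSnoc k e i.castSucc = k.succAbove (e i) := by
  have : finSuccEquiv' (Fin.last n) i.castSucc = some i := by
    rw [← Fin.succAbove_last, finSuccEquiv'_succAbove]
  simp [permSnoc, this]

lemma permSnoc_bijective :
    Function.Bijective fun x : Fin (n + 1) × Equiv.Perm (Fin n) => permSnoc x.1 x.2 := by
  rw [Fintype.bijective_iff_injective_and_card]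
  refine ⟨?_, by simp [Fintype.card_perm, Nat.factorial_succ]⟩
  rintro ⟨k, e⟩ ⟨k', e'⟩ h
  obtain rfl : k = k' := by simpa using DFunLike.congr_fun h (Fin.last n)
  have he : e = e' := Equiv.ext fun i => by simpa using DFunLike.congr_fun h i.castSucc
  rw [he]

lemma invCount_eq_sum (σ : Equiv.Perm (Fin n)) :
    invCount n σ = ∑ i, ∑ j, if i < j ∧ σ j < σ i then 1 else 0 := by
  rw [invCount, card_filter, ← univ_product_univ, sum_product]

lemma sum_lt_succAbove : (∑ i : Fin n, if k < k.succAbove i then 1 else 0) = n - (k : ℕ) := by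
  have h := Fin.sum_univ_succAbove (fun j => if k < j then 1 else 0) k
  rw [if_neg (lt_irrefl k), zero_add] at h
  rw [← h, ← card_filter, filter_lt_eq_Ioi, Fin.card_Ioi, Nat.add_sub_cancel]

lemma invCount_permSnoc : invCount (n + 1) (permSnoc k e) = invCount n e + (n - k) := by
  rw [invCount_eq_sum, invCount_eq_sum, Fin.sum_univ_castSucc, ← sum_lt_succAbove k,
    ← Equiv.sum_comp e (fun i => if k < k.succAbove i then 1 else 0)]
  simp only [Fin.sum_univ_castSucc, sum_add_distrib, permSnoc_castSucc, permSnoc_last,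
    Fin.castSucc_lt_castSucc_iff, Fin.succAbove_lt_succAbove_iff, Fin.castSucc_lt_last,
    (Fin.castSucc_lt_last _).not_gt, lt_irrefl, true_and, false_and, if_false, sum_const_zero,
    add_zero]

end PermSnoc

section Recursion

variable {n : ℕ} {A : Finset (Equiv.Perm (Fin (n + 1)))} {B C : Finset (Equiv.Perm (Fin n))}

lemma sum_pow_invCount_succ {R : Type*} [CommSemiring R] (q : R)
    (hB : ∀ e, permSnoc (Fin.last n) e ∈ A ↔ e ∈ B)
    (hC : ∀ (k : Fin n) (e), permSnoc k.castSucc e ∈ A ↔ e ∈ C) :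
    ∑ σ ∈ A, q ^ invCount (n + 1) σ =
      ∑ e ∈ B, q ^ invCount n e + q * qNumber q n * ∑ e ∈ C, q ^ invCount n e := by
  calc ∑ σ ∈ A, q ^ invCount (n + 1) σ
      = ∑ k, ∑ e, if permSnoc k e ∈ A then q ^ invCount (n + 1) (permSnoc k e) else 0 := by
        rw [← univ_inter A, ← sum_ite_mem, ← permSnoc_bijective.sum_comp, univ_inter,
          Fintype.sum_prod_type]
    _ = ∑ k : Fin n, q ^ (n - (k : ℕ)) * ∑ e ∈ C, q ^ invCount n e +
          ∑ e ∈ B, q ^ invCount n e := by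
        simp only [Fin.sum_univ_castSucc, hB, hC, invCount_permSnoc, sum_ite_mem, univ_inter,
          Fin.val_castSucc, Fin.val_last, Nat.sub_self, pow_add, pow_zero, mul_one, mul_sum,
          mul_comm]
    _ = _ := by rw [← sum_mul, sum_pow_sub_eq_mul_qNumber, add_comm]

lemma mallowsZ_succ (n : ℕ) (q : ℝ) : mallowsZ (n + 1) q = qNumber q (n + 1) * mallowsZ n q := by
  rw [mallowsZ, sum_pow_invCount_succ (B := univ) (C := univ) q (by simp) (by simp), qNumber_succ,
    mallowsZ]
  ring

lemma mallowsProb_succ (q : ℝ) (hB : ∀ e, permSnoc (Fin.last n) e ∈ A ↔ e ∈ B)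
    (hC : ∀ (k : Fin n) (e), permSnoc k.castSucc e ∈ A ↔ e ∈ C) :
    mallowsProb (n + 1) q A =
      (mallowsProb n q B + q * qNumber q n * mallowsProb n q C) / qNumber q (n + 1) := by
  simp only [mallowsProb, sum_pow_invCount_succ q hB hC, mallowsZ_succ]
  ring

end Recursion

lemma mallowsZ_pos (n : ℕ) {q : ℝ} (hq : 0 < q) : 0 < mallowsZ n q :=
  sum_pos (fun _ _ => pow_pos hq _) univ_nonempty

lemma mallowsProb_univ (n : ℕ) {q : ℝ} (hq : 0 < q) : mallowsProb n q univ = 1 :=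
  div_self (mallowsZ_pos n hq).ne'

/-- The event that the best of `n` items is among the first `M` to arrive. The success probability
is bounded in terms of the probability of this event. -/
def bestAmongFirst (n M : ℕ) : Finset (Equiv.Perm (Fin n)) :=
  {σ | ∃ i : Fin n, (i : ℕ) < M ∧ (σ i : ℕ) = n - 1}

section Events

variable {n M : ℕ}

lemma mem_bestAmongFirst {σ : Equiv.Perm (Fin n)} :
    σ ∈ bestAmongFirst n M ↔ ∃ i : Fin n, (i : ℕ) < M ∧ (σ i : ℕ) = n - 1 := by
  simp [bestAmongFirst]

lemma mem_bestAmongFirst_iff_forall_exists_le (hn : 0 < n) {σ : Equiv.Perm (Fin n)} :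
    σ ∈ bestAmongFirst n M ↔ ∀ i, ∃ l : Fin n, (l : ℕ) < M ∧ σ i ≤ σ l := by
  rw [mem_bestAmongFirst]
  constructor
  · rintro ⟨l, hl, hbest⟩ i
    exact ⟨l, hl, Fin.le_def.2 (by omega)⟩
  · intro h
    obtain ⟨l, hl, hle⟩ := h (σ.symm ⟨n - 1, by omega⟩)
    rw [Equiv.apply_symm_apply, Fin.le_def] at hle
    exact ⟨l, hl, by dsimp only at hle; omega⟩

lemma mem_winEvent_iff (hM : 0 < M) {σ : Equiv.Perm (Fin n)} :
    σ ∈ winEvent n M ↔ ∃ j : Fin n, M ≤ (j : ℕ) ∧ (σ j : ℕ) = n - 1 ∧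
      ∀ i < j, ∃ l : Fin n, (l : ℕ) < M ∧ σ i ≤ σ l := by
  simp only [winEvent, if_neg hM.ne', mem_filter_univ]
  refine exists_congr fun j => and_congr_right fun hj => and_congr_right fun _ => ?_
  have hsub : univ.filter (fun i : Fin n => (i : ℕ) < M) ⊆ univ.filter (· < j) :=
    monotone_filter_right _ fun i _ hi => Fin.lt_def.2 (lt_of_lt_of_le hi hj)
  have hne : (univ.filter fun i : Fin n => (i : ℕ) < M).Nonempty :=
    ⟨⟨0, j.pos⟩, by simpa using hM⟩
  rw [← (sup_mono hsub).ge_iff_eq', Finset.sup_le_iff, ← sup'_eq_sup hne]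
  simp only [le_sup'_iff, mem_filter_univ, Fin.val_fin_le]

lemma val_succAbove_castSucc_eq_iff (k v : Fin n) :
    (k.castSucc.succAbove v : ℕ) = n ↔ (v : ℕ) = n - 1 := by
  rcases lt_or_ge v.castSucc k.castSucc with h | h
  · rw [Fin.succAbove_of_castSucc_lt _ _ h]
    simp only [Fin.lt_def, Fin.val_castSucc] at h ⊢
    omega
  · rw [Fin.succAbove_of_le_castSucc _ _ h, Fin.val_succ]
    omega

lemma exists_succAbove_le_permSnoc_iff (hMn : M ≤ n) {k : Fin (n + 1)} {e : Equiv.Perm (Fin n)}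
    {v : Fin n} :
    (∃ l : Fin (n + 1), (l : ℕ) < M ∧ k.succAbove v ≤ permSnoc k e l) ↔
      ∃ l : Fin n, (l : ℕ) < M ∧ v ≤ e l := by
  simp [Fin.exists_iff_castSucc, hMn.not_gt, Fin.succAbove_le_succAbove_iff]

lemma permSnoc_last_notMem_bestAmongFirst (hMn : M ≤ n) (e : Equiv.Perm (Fin n)) :
    permSnoc (Fin.last n) e ∉ bestAmongFirst (n + 1) M := by
  simp [mem_bestAmongFirst, Fin.exists_iff_castSucc, hMn.not_gt, (e _).isLt.ne]

lemma permSnoc_castSucc_mem_bestAmongFirst (hMn : M ≤ n) (k : Fin n) (e : Equiv.Perm (Fin n)) :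
    permSnoc k.castSucc e ∈ bestAmongFirst (n + 1) M ↔ e ∈ bestAmongFirst n M := by
  simp only [mem_bestAmongFirst, Fin.exists_iff_castSucc, Fin.val_last, hMn.not_gt, false_and,
    false_or, Fin.val_castSucc, permSnoc_castSucc, Nat.add_sub_cancel,
    val_succAbove_castSucc_eq_iff]

lemma permSnoc_last_mem_winEvent (hM : 0 < M) (hMn : M ≤ n) (e : Equiv.Perm (Fin n)) :
    permSnoc (Fin.last n) e ∈ winEvent (n + 1) M ↔ e ∈ bestAmongFirst n M := by
  rw [mem_winEvent_iff hM, mem_bestAmongFirst_iff_forall_exists_le (hM.trans_le hMn)]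
  have hbest := fun v => exists_succAbove_le_permSnoc_iff hMn (k := Fin.last n) (e := e) (v := v)
  simp only [Fin.succAbove_last] at hbest
  rw [Fin.exists_iff_castSucc]
  simp [Fin.forall_fin_succ', hMn, (e _).isLt.ne, hbest]

lemma permSnoc_castSucc_mem_winEvent (hM : 0 < M) (hMn : M ≤ n) (k : Fin n)
    (e : Equiv.Perm (Fin n)) :
    permSnoc k.castSucc e ∈ winEvent (n + 1) M ↔ e ∈ winEvent n M := by
  rw [mem_winEvent_iff hM, mem_winEvent_iff hM, Fin.exists_iff_castSucc]
  simp [Fin.forall_fin_succ', exists_succAbove_le_permSnoc_iff hMn, val_succAbove_castSucc_eq_iff,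
    k.isLt.ne, (Fin.castSucc_lt_last _).not_gt]

end Events

section ClosedForm

variable {q : ℝ} {n M : ℕ}

lemma bestAmongFirst_self (hM : 0 < M) : bestAmongFirst M M = univ :=
  eq_univ_of_forall fun _ => (mem_bestAmongFirst_iff_forall_exists_le hM).2 fun i =>
    ⟨i, i.isLt, le_rfl⟩

lemma winEvent_self (hM : 0 < M) : winEvent M M = ∅ :=
  eq_empty_of_forall_notMem fun _ h =>
    let ⟨j, hj, _⟩ := (mem_winEvent_iff hM).1 h
    j.isLt.not_ge hj

lemma mallowsProb_bestAmongFirst_succ (q : ℝ) (hMn : M ≤ n) :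
    mallowsProb (n + 1) q (bestAmongFirst (n + 1) M) =
      q * qNumber q n / qNumber q (n + 1) * mallowsProb n q (bestAmongFirst n M) := by
  rw [mallowsProb_succ (B := ∅) q (by simp [permSnoc_last_notMem_bestAmongFirst hMn])
    (permSnoc_castSucc_mem_bestAmongFirst hMn)]
  simp only [mallowsProb, sum_empty]
  ring

lemma succProb_succ (q : ℝ) (hM : 0 < M) (hMn : M ≤ n) :
    succProb (n + 1) M q =
      (mallowsProb n q (bestAmongFirst n M) + q * qNumber q n * succProb n M q) /
        qNumber q (n + 1) :=
  mallowsProb_succ q (permSnoc_last_mem_winEvent hM hMn) (permSnoc_castSucc_mem_winEvent hM hMn)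

lemma mallowsProb_bestAmongFirst (hq : 0 < q) (hM : 0 < M) (hMn : M ≤ n) :
    mallowsProb n q (bestAmongFirst n M) = q ^ (n - M) * qNumber q M / qNumber q n := by
  induction n, hMn using Nat.le_induction with
  | base =>
    rw [bestAmongFirst_self hM, mallowsProb_univ M hq, Nat.sub_self, pow_zero, one_mul,
      div_self (qNumber_pos hq hM).ne']
  | succ n hMn ih =>
    have := (qNumber_pos hq (hM.trans_le hMn)).ne'
    rw [mallowsProb_bestAmongFirst_succ q hMn, ih, Nat.succ_sub hMn, pow_succ]
    field_simp

lemma mallowsProb_bestAmongFirst_pos (hq : 0 < q) (hM : 0 < M) (hMn : M ≤ n) :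
    0 < mallowsProb n q (bestAmongFirst n M) := by
  rw [mallowsProb_bestAmongFirst hq hM hMn]
  have := qNumber_pos hq hM
  have := qNumber_pos hq (hM.trans_le hMn)
  positivity

lemma succProb_eq_mul_sum (hq : 0 < q) (hM : 0 < M) (hMn : M ≤ n) :
    succProb n M q =
      mallowsProb n q (bestAmongFirst n M) * ∑ j ∈ Ico M n, (q * qNumber q j)⁻¹ := by
  induction n, hMn using Nat.le_induction with
  | base => simp [succProb, winEvent_self hM, mallowsProb]
  | succ n hMn ih =>
    have := (qNumber_pos hq (hM.trans_le hMn)).ne'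
    rw [succProb_succ q hM hMn, ih, mallowsProb_bestAmongFirst_succ q hMn,
      sum_Ico_succ_top hMn]
    field_simp
    ring

end ClosedForm

section Bounds

variable {q : ℝ} {n M : ℕ}

lemma neg_log_mallowsProb_bestAmongFirst_eq_sum (hq : 0 < q) (hM : 0 < M) (hMn : M ≤ n) :
    -log (mallowsProb n q (bestAmongFirst n M)) =
      ∑ j ∈ Ico M n, log (qNumber q (j + 1) / (q * qNumber q j)) := by
  induction n, hMn using Nat.le_induction with
  | base => simp [bestAmongFirst_self hM, mallowsProb_univ M hq]
  | succ n hMn ih =>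
    have hn := qNumber_pos hq (hM.trans_le hMn)
    have hn' := qNumber_pos hq n.succ_pos
    rw [sum_Ico_succ_top hMn, ← ih, mallowsProb_bestAmongFirst_succ q hMn,
      log_mul (by positivity) (mallowsProb_bestAmongFirst_pos hq hM hMn).ne', ← inv_div, log_inv]
    ring

lemma qNumber_succ_div (hq : 0 < q) (hn : 0 < n) :
    qNumber q (n + 1) / (q * qNumber q n) = 1 + (q * qNumber q n)⁻¹ := by
  have := (qNumber_pos hq hn).ne'
  rw [qNumber_succ]
  field_simp

lemma neg_log_mallowsProb_bestAmongFirst_le_sum (hq : 0 < q) (hM : 0 < M) (hMn : M ≤ n) :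
    -log (mallowsProb n q (bestAmongFirst n M)) ≤ ∑ j ∈ Ico M n, (q * qNumber q j)⁻¹ := by
  rw [neg_log_mallowsProb_bestAmongFirst_eq_sum hq hM hMn]
  refine sum_le_sum fun j hj => ?_
  have hj : 0 < j := hM.trans_le (mem_Ico.1 hj).1
  have := qNumber_pos hq hj
  rw [qNumber_succ_div hq hj]
  linarith [log_le_sub_one_of_pos (show 0 < 1 + (q * qNumber q j)⁻¹ by positivity)]

lemma sum_inv_qNumber_succ_le_neg_log (hq : 0 < q) (hM : 0 < M) (hMn : M ≤ n) :
    ∑ j ∈ Ico M n, (qNumber q (j + 1))⁻¹ ≤ -log (mallowsProb n q (bestAmongFirst n M)) := by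
  rw [neg_log_mallowsProb_bestAmongFirst_eq_sum hq hM hMn]
  refine sum_le_sum fun j hj => ?_
  have hj := qNumber_pos hq (hM.trans_le (mem_Ico.1 hj).1)
  have hj' := qNumber_pos hq j.succ_pos
  calc (qNumber q (j + 1))⁻¹ = 1 - (qNumber q (j + 1) / (q * qNumber q j))⁻¹ := by
        rw [inv_div]
        field_simp
        rw [qNumber_succ]
        ring
    _ ≤ _ := one_sub_inv_le_log_of_pos (by positivity)

lemma mul_sum_inv_mul_qNumber_le (hq : 0 < q) (hM : 0 < M) (hMn : M ≤ n) :
    q * ∑ j ∈ Ico M n, (q * qNumber q j)⁻¹ ≤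
      -log (mallowsProb n q (bestAmongFirst n M)) + (qNumber q M)⁻¹ := by
  have htelescope := sum_Ico_sub (fun j => (qNumber q j)⁻¹) hMn
  rw [sum_sub_distrib] at htelescope
  have hn := inv_pos.2 (qNumber_pos hq (hM.trans_le hMn))
  have hsum : q * ∑ j ∈ Ico M n, (q * qNumber q j)⁻¹ = ∑ j ∈ Ico M n, (qNumber q j)⁻¹ := by
    simp only [mul_sum, mul_inv, mul_inv_cancel_left₀ hq.ne']
  linarith [sum_inv_qNumber_succ_le_neg_log hq hM hMn]

lemma negMulLog_le_succProb (hq : 0 < q) (hM : 0 < M) (hMn : M ≤ n) :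
    negMulLog (mallowsProb n q (bestAmongFirst n M)) ≤ succProb n M q := by
  rw [succProb_eq_mul_sum hq hM hMn, negMulLog, neg_mul_comm]
  exact mul_le_mul_of_nonneg_left (neg_log_mallowsProb_bestAmongFirst_le_sum hq hM hMn)
    (mallowsProb_bestAmongFirst_pos hq hM hMn).le

lemma mul_succProb_le (hq : 0 < q) (hM : 0 < M) (hMn : M ≤ n) :
    q * succProb n M q ≤
      negMulLog (mallowsProb n q (bestAmongFirst n M)) + q ^ (n - M) / qNumber q n := by
  set p := mallowsProb n q (bestAmongFirst n M) with hp
  have hpM : p * (qNumber q M)⁻¹ = q ^ (n - M) / qNumber q n := by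
    have := (qNumber_pos hq hM).ne'
    rw [hp, mallowsProb_bestAmongFirst hq hM hMn]
    field_simp
  calc q * succProb n M q = p * (q * ∑ j ∈ Ico M n, (q * qNumber q j)⁻¹) := by
        rw [succProb_eq_mul_sum hq hM hMn, mul_left_comm]
    _ ≤ p * (-log p + (qNumber q M)⁻¹) :=
        mul_le_mul_of_nonneg_left (mul_sum_inv_mul_qNumber_le hq hM hMn)
          (mallowsProb_bestAmongFirst_pos hq hM hMn).le
    _ = negMulLog p + q ^ (n - M) / qNumber q n := by rw [mul_add, hpM, negMulLog, neg_mul_comm]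

end Bounds

section Asymptotics

variable {c b : ℝ} {q : ℕ → ℝ} {M : ℕ → ℕ}

lemma tendsto_one_of_tendsto_mul_one_sub (hq : Tendsto (fun n : ℕ => n * (1 - q n)) atTop (𝓝 c)) :
    Tendsto q atTop (𝓝 1) := by
  have h := tendsto_const_nhds (x := (1 : ℝ)) |>.sub (hq.mul tendsto_inv_atTop_nhds_zero_nat)
  rw [mul_zero, sub_zero] at h
  refine h.congr' ?_
  filter_upwards [eventually_ne_atTop 0] with n hn
  field_simp
  ring

lemma tendsto_pow_exp_of_tendsto_mul_one_sub
    (hq : Tendsto (fun n : ℕ => n * (1 - q n)) atTop (𝓝 c))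
    (hM : Tendsto (fun n : ℕ => (M n : ℝ) / n) atTop (𝓝 b)) :
    Tendsto (fun n => q n ^ M n) atTop (𝓝 (exp (-(b * c)))) := by
  have hlog : Tendsto (fun n : ℕ => n * log (q n)) atTop (𝓝 (-c)) := by
    simpa using tendsto_nat_mul_log_one_add_of_tendsto (g := fun n => q n - 1)
      (by simpa [← mul_neg] using hq.neg)
  have hexp := (continuous_exp.tendsto _).comp (hM.mul hlog)
  rw [mul_neg] at hexp
  refine hexp.congr' ?_
  filter_upwards [(tendsto_one_of_tendsto_mul_one_sub hq).eventually_const_lt one_pos,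
    eventually_ne_atTop 0] with n hqn hn
  have : (n : ℝ) ≠ 0 := Nat.cast_ne_zero.2 hn
  rw [Function.comp_apply, ← mul_assoc, div_mul_cancel₀ _ this, exp_nat_mul, exp_log hqn]

lemma tendsto_natCast_div_self : Tendsto (fun n : ℕ => (n : ℝ) / n) atTop (𝓝 1) :=
  tendsto_const_nhds.congr' <| by
    filter_upwards [eventually_ne_atTop 0] with n hn
    rw [div_self (Nat.cast_ne_zero.2 hn)]

lemma tendsto_natCast_sub_div (hMn : ∀ᶠ n in atTop, M n ≤ n)
    (hM : Tendsto (fun n : ℕ => (M n : ℝ) / n) atTop (𝓝 b)) :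
    Tendsto (fun n : ℕ => ((n - M n : ℕ) : ℝ) / n) atTop (𝓝 (1 - b)) := by
  refine (tendsto_natCast_div_self.sub hM).congr' ?_
  filter_upwards [hMn] with n hn
  rw [Nat.cast_sub hn, sub_div]

lemma eventually_ne_one_of_tendsto_mul_one_sub (hc : c ≠ 0)
    (hq : Tendsto (fun n : ℕ => n * (1 - q n)) atTop (𝓝 c)) : ∀ᶠ n in atTop, q n ≠ 1 := by
  filter_upwards [hq.eventually_ne hc] with n hn h
  simp [h] at hn

lemma exp_neg_sub_one_ne_zero (hc : c ≠ 0) : exp (-c) - 1 ≠ 0 := by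
  simpa [sub_eq_zero] using hc

lemma tendsto_pow_div_qNumber_zero (hc : c ≠ 0)
    (hq : Tendsto (fun n : ℕ => n * (1 - q n)) atTop (𝓝 c))
    (hM : Tendsto (fun n : ℕ => (M n : ℝ) / n) atTop (𝓝 b)) :
    Tendsto (fun n => q n ^ M n / qNumber (q n) n) atTop (𝓝 0) := by
  have hpow := tendsto_pow_exp_of_tendsto_mul_one_sub hq hM
  have hpow_n := tendsto_pow_exp_of_tendsto_mul_one_sub hq tendsto_natCast_div_self
  rw [one_mul] at hpow_n
  have h := (hpow.mul ((tendsto_one_of_tendsto_mul_one_sub hq).sub_const 1)).div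
    (hpow_n.sub_const 1) (exp_neg_sub_one_ne_zero hc)
  rw [sub_self, mul_zero, zero_div] at h
  refine h.congr' ?_
  filter_upwards [eventually_ne_one_of_tendsto_mul_one_sub hc hq] with n hn
  rw [Pi.div_apply, qNumber, geom_sum_eq hn, div_div_eq_mul_div]

lemma tendsto_mallowsProb_bestAmongFirst (hc : c ≠ 0)
    (hq : Tendsto (fun n : ℕ => n * (1 - q n)) atTop (𝓝 c))
    (hMn : ∀ᶠ n in atTop, 1 ≤ M n ∧ M n ≤ n)
    (hM : Tendsto (fun n : ℕ => (M n : ℝ) / n) atTop (𝓝 b)) :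
    Tendsto (fun n => mallowsProb n (q n) (bestAmongFirst n (M n))) atTop
      (𝓝 ((exp (b * c) - 1) / (exp c - 1))) := by
  have hpow := tendsto_pow_exp_of_tendsto_mul_one_sub hq
    (tendsto_natCast_sub_div (hMn.mono fun _ h => h.2) hM)
  have hpow_M := tendsto_pow_exp_of_tendsto_mul_one_sub hq hM
  have hpow_n := tendsto_pow_exp_of_tendsto_mul_one_sub hq tendsto_natCast_div_self
  rw [one_mul] at hpow_n
  have hlim_eq : exp (-((1 - b) * c)) * (exp (-(b * c)) - 1) / (exp (-c) - 1) =
      (exp (b * c) - 1) / (exp c - 1) := by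
    have hnum : exp (-((1 - b) * c)) * (exp (-(b * c)) - 1) = exp (-c) * (1 - exp (b * c)) := by
      rw [mul_sub, mul_sub, ← exp_add, ← exp_add]
      ring_nf
    have hden : exp (-c) - 1 = exp (-c) * (1 - exp c) := by
      rw [mul_sub, ← exp_add, neg_add_cancel, exp_zero, mul_one]
    rw [hnum, hden, mul_div_mul_left _ _ (exp_ne_zero _), ← neg_div_neg_eq, neg_sub, neg_sub]
  have h := (hpow.mul (hpow_M.sub_const 1)).div (hpow_n.sub_const 1) (exp_neg_sub_one_ne_zero hc)
  rw [hlim_eq] at h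
  refine h.congr' ?_
  filter_upwards [eventually_ne_one_of_tendsto_mul_one_sub hc hq, hMn,
    (tendsto_one_of_tendsto_mul_one_sub hq).eventually_const_lt one_pos] with n hqn ⟨hM1, hMn⟩ hqpos
  rw [mallowsProb_bestAmongFirst hqpos hM1 hMn, qNumber, qNumber, geom_sum_eq hqn,
    geom_sum_eq hqn, Pi.div_apply, ← mul_div_assoc,
    div_div_div_cancel_right₀ (sub_ne_zero.2 hqn)]

theorem stmt_4_general (hc : c ≠ 0) (hq : Tendsto (fun n : ℕ => n * (1 - q n)) atTop (𝓝 c))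
    (hMn : ∀ᶠ n in atTop, 1 ≤ M n ∧ M n ≤ n)
    (hM : Tendsto (fun n : ℕ => (M n : ℝ) / n) atTop (𝓝 b)) :
    Tendsto (fun n => succProb n (M n) (q n)) atTop
      (𝓝 (negMulLog ((exp (b * c) - 1) / (exp c - 1)))) := by
  have hq_one := tendsto_one_of_tendsto_mul_one_sub hq
  have hlower := (continuous_negMulLog.tendsto _).comp
    (tendsto_mallowsProb_bestAmongFirst hc hq hMn hM)
  have hremainder := tendsto_pow_div_qNumber_zero hc hq
    (tendsto_natCast_sub_div (hMn.mono fun _ h => h.2) hM)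
  have hupper := (hlower.add hremainder).div hq_one one_ne_zero
  rw [add_zero, div_one] at hupper
  refine tendsto_of_tendsto_of_tendsto_of_le_of_le' hlower hupper ?_ ?_
  all_goals filter_upwards [hMn, hq_one.eventually_const_lt one_pos] with n ⟨hM1, hMn⟩ hqn
  · exact negMulLog_le_succProb hqn hM1 hMn
  · exact (le_div_iff₀' hqn).2 (mul_succProb_le hqn hM1 hMn)

end Asymptotics

lemma tendsto_mul_one_sub_one_sub_div (c : ℝ) :
    Tendsto (fun n : ℕ => n * (1 - (1 - c / n))) atTop (𝓝 c) :=
  tendsto_const_nhds.congr' <| by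
    filter_upwards [eventually_ne_atTop 0] with n hn
    field_simp
    ring

lemma negMulLog_inv_exp_one : negMulLog (exp 1)⁻¹ = (exp 1)⁻¹ := by
  simp [negMulLog]

lemma exp_critical_sub_one_div {c : ℝ} (hc : c ≠ 0) :
    (exp (1 / c * log (1 + (exp c - 1) / exp 1) * c) - 1) / (exp c - 1) = (exp 1)⁻¹ := by
  have hpos : 0 < 1 + (exp c - 1) / exp 1 := by
    rw [← neg_lt_iff_pos_add', lt_div_iff₀ (exp_pos 1)]
    linarith [exp_pos c, one_lt_exp_iff.2 one_pos]
  have hexp : exp c - 1 ≠ 0 := by simpa [sub_eq_zero] using hc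
  rw [one_div, mul_right_comm, inv_mul_cancel₀ hc, one_mul, exp_log hpos]
  field_simp
  ring

theorem stmt_4 (c : ℝ) (hc : 0 < c)
    (Mstar : ℕ → ℕ) (hMstar : ∀ n, 2 ≤ n → 1 ≤ Mstar n ∧ Mstar n ≤ n - 1)
    (hlim : Tendsto (fun n : ℕ => (Mstar n : ℝ) / n) atTop
      (nhds ((1 / c) * Real.log (1 + (Real.exp c - 1) / Real.exp 1)))) :
    Tendsto (fun n : ℕ => succProb n (Mstar n) (1 - c / n)) atTop
      (nhds (Real.exp 1)⁻¹) := by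
  rw [← negMulLog_inv_exp_one, ← exp_critical_sub_one_div hc.ne']
  refine stmt_4_general hc.ne' (tendsto_mul_one_sub_one_sub_div c) ?_ hlim
  filter_upwards [eventually_ge_atTop 2] with n hn
  exact (hMstar n hn).imp_right fun h => h.trans (n.sub_le 1)
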